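/- arXiv:2505.22212 — 2 statements merged into one kernel-verified Lean document; each statement's English description precedes it below -/
import Mathlib

section
/- Let A be an m×n integer matrix, let f_1, …, f_n : ℤ → ℝ, let l, u ∈ ℤ^n, and let S ⊆ {1,…,n} be partitioned into two disjoint sets S₁ and S₂ with S = S₁ ∪ S₂. Then for every r ∈ ℤ^m and every η ∈ ℕ, the partial optimum satisfies the min-plus convolution identity V_S(r, η) = inf { V_{S₁}(r₁, η₁) + V_{S₂}(r₂, η₂) : r₁, r₂ ∈ ℤ^m, η₁, η₂ ∈ ℕ, r₁ + r₂ = r, η₁ + η₂ = η }, where the sum is taken in ℝ ∪ {+∞} with +∞ absorbing and the infimum of the empty set is +∞. -/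
/-- The partial optimum `V_S(r, η)`: the infimum (in `ℝ ∪ {+∞}`, modelled by
`EReal`, where the infimum of the empty set is `⊤ = +∞`) of `∑ i ∈ S, f i (g i)`
over integer vectors `g` (only the coordinates in `S` matter) satisfying
`∑ i ∈ S, g i • A_{•,i} = r`, `l i ≤ g i ≤ u i` for all `i ∈ S`, and
`∑ i ∈ S, |g i| = η`. -/
noncomputable def partialOpt {m n : ℕ} (A : Matrix (Fin m) (Fin n) ℤ)
    (f : Fin n → ℤ → ℝ) (l u : Fin n → ℤ) (S : Finset (Fin n))
    (r : Fin m → ℤ) (η : ℕ) : EReal :=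
  sInf { z : EReal | ∃ g : Fin n → ℤ,
    (∀ j, ∑ i ∈ S, g i * A j i = r j) ∧
    (∀ i ∈ S, l i ≤ g i ∧ g i ≤ u i) ∧
    (∑ i ∈ S, |g i| = (η : ℤ)) ∧
    z = ((∑ i ∈ S, f i (g i) : ℝ) : EReal) }

/-- The infimum is attained unless it is `⊤`, as the feasible box is finite. -/
theorem partialOpt_attained {m n : ℕ} (A : Matrix (Fin m) (Fin n) ℤ)
    (f : Fin n → ℤ → ℝ) (l u : Fin n → ℤ) (S : Finset (Fin n))
    (r : Fin m → ℤ) (η : ℕ) :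
    partialOpt A f l u S r η = ⊤ ∨ ∃ g : Fin n → ℤ,
    (∀ j, ∑ i ∈ S, g i * A j i = r j) ∧
    (∀ i ∈ S, l i ≤ g i ∧ g i ≤ u i) ∧
    (∑ i ∈ S, |g i| = (η : ℤ)) ∧
    partialOpt A f l u S r η = ((∑ i ∈ S, f i (g i) : ℝ) : EReal) := by
  unfold partialOpt
  set T := { z : EReal | ∃ g : Fin n → ℤ,
    (∀ j, ∑ i ∈ S, g i * A j i = r j) ∧
    (∀ i ∈ S, l i ≤ g i ∧ g i ≤ u i) ∧
    (∑ i ∈ S, |g i| = (η : ℤ)) ∧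
    z = ((∑ i ∈ S, f i (g i) : ℝ) : EReal) } with hT
  rcases T.eq_empty_or_nonempty with h | h
  · left
    rw [h, sInf_empty]
  · right
    have hfin : T.Finite := by
      refine Set.Finite.subset
        ((Fintype.piFinset (fun i => Finset.Icc (min (l i) 0) (max (u i) 0))).finite_toSet.image
          (fun g : Fin n → ℤ => ((∑ i ∈ S, f i (g i) : ℝ) : EReal))) ?_
      rintro z ⟨g, -, hb, -, rfl⟩
      refine ⟨fun i => if i ∈ S then g i else 0, ?_, ?_⟩
      · simp only [Finset.mem_coe, Fintype.mem_piFinset, Finset.mem_Icc]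
        intro i
        by_cases hi : i ∈ S
        · have := hb i hi
          simp [hi, this.1, this.2]
        · simp [hi]
      · dsimp only
        congr 1
        exact Finset.sum_congr rfl (fun i hi => by simp [hi])
    exact h.csInf_mem hfin

/-- If `S` is partitioned into disjoint sets `S₁` and `S₂`,
then for every `r ∈ ℤ^m` and `η ∈ ℕ` the partial optimum satisfies the
min-plus convolution identity
`V_S(r, η) = inf { V_{S₁}(r₁, η₁) + V_{S₂}(r₂, η₂) : r₁ + r₂ = r, η₁ + η₂ = η }`,
where addition is in `ℝ ∪ {+∞}` (with `+∞` absorbing) and the infimum of the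
empty set is `+∞`. -/
theorem partialOpt_convolution {m n : ℕ}
    (A : Matrix (Fin m) (Fin n) ℤ) (f : Fin n → ℤ → ℝ) (l u : Fin n → ℤ)
    (S S₁ S₂ : Finset (Fin n)) (hdisj : Disjoint S₁ S₂) (hunion : S = S₁ ∪ S₂)
    (r : Fin m → ℤ) (η : ℕ) :
    partialOpt A f l u S r η =
      sInf { z : EReal | ∃ (r₁ r₂ : Fin m → ℤ) (η₁ η₂ : ℕ),
        r₁ + r₂ = r ∧ η₁ + η₂ = η ∧
        z = partialOpt A f l u S₁ r₁ η₁ + partialOpt A f l u S₂ r₂ η₂ } := by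
  subst hunion
  apply le_antisymm
  · apply le_sInf
    rintro z ⟨r₁, r₂, η₁, η₂, rfl, rfl, rfl⟩
    have hbot : ∀ (S : Finset (Fin n)) (r : Fin m → ℤ) (η : ℕ),
        partialOpt A f l u S r η ≠ ⊥ := by
      intro S r η
      rcases partialOpt_attained A f l u S r η with h | ⟨g, -, -, -, h⟩ <;> rw [h]
      · exact top_ne_bot
      · exact EReal.coe_ne_bot _
    rcases partialOpt_attained A f l u S₁ r₁ η₁ with h1 | ⟨g₁, ha1, hb1, hc1, h1⟩
    · rw [h1, EReal.top_add_of_ne_bot (hbot _ _ _)]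
      exact le_top
    rcases partialOpt_attained A f l u S₂ r₂ η₂ with h2 | ⟨g₂, ha2, hb2, hc2, h2⟩
    · rw [h2, EReal.add_top_of_ne_bot (hbot _ _ _)]
      exact le_top
    rw [h1, h2, ← EReal.coe_add]
    have e1 : ∀ i ∈ S₁, (if i ∈ S₁ then g₁ i else g₂ i) = g₁ i := fun i hi => if_pos hi
    have e2 : ∀ i ∈ S₂, (if i ∈ S₁ then g₁ i else g₂ i) = g₂ i :=
      fun i hi => if_neg (fun h => Finset.disjoint_left.mp hdisj h hi)
    apply sInf_le
    refine ⟨fun i => if i ∈ S₁ then g₁ i else g₂ i, ?_, ?_, ?_, ?_⟩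
    · intro j
      rw [Finset.sum_union hdisj, Pi.add_apply, ← ha1 j, ← ha2 j]
      exact congrArg₂ _ (Finset.sum_congr rfl fun i hi => by beta_reduce; rw [e1 i hi])
        (Finset.sum_congr rfl fun i hi => by beta_reduce; rw [e2 i hi])
    · intro i hi
      dsimp only
      rcases Finset.mem_union.mp hi with h | h
      · rw [e1 i h]
        exact hb1 i h
      · rw [e2 i h]
        exact hb2 i h
    · rw [Finset.sum_union hdisj, Nat.cast_add, ← hc1, ← hc2]
      exact congrArg₂ _ (Finset.sum_congr rfl fun i hi => by beta_reduce; rw [e1 i hi])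
        (Finset.sum_congr rfl fun i hi => by beta_reduce; rw [e2 i hi])
    · rw [Finset.sum_union hdisj]
      congr 1
      exact congrArg₂ _ (Finset.sum_congr rfl fun i hi => by beta_reduce; rw [e1 i hi])
        (Finset.sum_congr rfl fun i hi => by beta_reduce; rw [e2 i hi])
  · apply le_sInf
    rintro z ⟨g, ha, hb, hc, rfl⟩
    have key : ∀ T : Finset (Fin n), T ⊆ S₁ ∪ S₂ →
        partialOpt A f l u T (fun j => ∑ i ∈ T, g i * A j i) (∑ i ∈ T, (g i).natAbs)
          ≤ ((∑ i ∈ T, f i (g i) : ℝ) : EReal) := fun T hT =>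
      sInf_le ⟨g, fun j => rfl, fun i hi => hb i (hT hi), by simp, rfl⟩
    rw [Finset.sum_union hdisj, EReal.coe_add]
    refine le_trans (sInf_le ⟨_, _, _, _, ?_, ?_, rfl⟩)
      (add_le_add (key S₁ Finset.subset_union_left) (key S₂ Finset.subset_union_right))
    · funext j
      rw [← ha j, Finset.sum_union hdisj]
      rfl
    · rw [← Finset.sum_union hdisj]
      zify
      exact hc
end

section
/- Let A be an m×n integer matrix, let f_1, …, f_n : ℤ → ℝ, let l, u ∈ ℤ^n, and let 1 ≤ j ≤ n. Then for every s ∈ ℤ^m and η ∈ ℕ, the partial optimum over the first j columns obeys the dynamic-programming recurrence V_{{1,…,j}}(s, η) = min { f_j(c) + V_{{1,…,j−1}}(s − c·A_{•,j}, η − |c|) : c ∈ ℤ, |c| ≤ η, l_j ≤ c ≤ u_j }, where the minimum over an empty set is +∞ and addition in ℝ ∪ {+∞} is with +∞ absorbing. -/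
/-- The set `{1, …, j}` of the first `j` column indices (0-indexed as
`{i : Fin n | (i : ℕ) < j}`). -/
def firstCols (n j : ℕ) : Finset (Fin n) := Finset.univ.filter (fun i => (i : ℕ) < j)

theorem firstCols_pred_insert {n j : ℕ} (hj1 : 1 ≤ j) (h : j - 1 < n) :
    firstCols n j = insert (⟨j - 1, h⟩ : Fin n) (firstCols n (j - 1)) := by
  ext i
  simp only [firstCols, Finset.mem_filter, Finset.mem_univ, true_and, Finset.mem_insert,
    Fin.ext_iff]
  omega

theorem notMem_firstCols_pred {n j : ℕ} (h : j - 1 < n) :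
    (⟨j - 1, h⟩ : Fin n) ∉ firstCols n (j - 1) := by
  simp [firstCols]

theorem partialOpt_insert {m n : ℕ}
    (A : Matrix (Fin m) (Fin n) ℤ) (f : Fin n → ℤ → ℝ) (l u : Fin n → ℤ)
    (S : Finset (Fin n)) (k : Fin n) (hk : k ∉ S) (s : Fin m → ℤ) (η : ℕ) :
    partialOpt A f l u (insert k S) s η =
      sInf { z : EReal | ∃ c : ℤ, |c| ≤ (η : ℤ) ∧ l k ≤ c ∧ c ≤ u k ∧
        z = ((f k c : ℝ) : EReal) +
          partialOpt A f l u S (fun i => s i - c * A i k) (η - c.natAbs) } := by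
  apply le_antisymm
  · apply le_sInf
    rintro z ⟨c, hc, hl, hu, rfl⟩
    have key : partialOpt A f l u (insert k S) s η - ((f k c : ℝ) : EReal) ≤
        partialOpt A f l u S (fun i => s i - c * A i k) (η - c.natAbs) := by
      apply le_sInf
      rintro z ⟨g, h1, h2, h3, rfl⟩
      have hne : ∀ i ∈ S, Function.update g k c i = g i := by
        intro i hi
        have hik : i ≠ k := by
          rintro rfl
          exact hk hi
        exact Function.update_of_ne hik _ _
      have hle : partialOpt A f l u (insert k S) s η ≤
          ((f k c + ∑ i ∈ S, f i (g i) : ℝ) : EReal) := by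
        apply sInf_le
        refine ⟨Function.update g k c, ?_, ?_, ?_, ?_⟩
        · intro i
          rw [Finset.sum_insert hk, Function.update_self,
            Finset.sum_congr rfl (fun x hx => by rw [hne x hx]), h1 i]
          ring
        · intro i hi
          rcases Finset.mem_insert.1 hi with rfl | hi
          · simpa using ⟨hl, hu⟩
          · rw [hne i hi]; exact h2 i hi
        · rw [Finset.sum_insert hk, Function.update_self,
            Finset.sum_congr rfl (fun x hx => by rw [hne x hx]), h3]
          have := Int.natCast_natAbs c
          omega
        · rw [Finset.sum_insert hk, Function.update_self]
          have : ∑ i ∈ S, f i (Function.update g k c i) = ∑ i ∈ S, f i (g i) :=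
            Finset.sum_congr rfl (fun x hx => by rw [hne x hx])
          rw [this]
      apply EReal.sub_le_of_le_add
      rw [add_comm, ← EReal.coe_add]
      exact hle
    rw [add_comm]
    exact (EReal.sub_le_iff_le_add (Or.inl (EReal.coe_ne_bot _))
      (Or.inl (EReal.coe_ne_top _))).1 key
  · apply le_sInf
    rintro z ⟨g, h1, h2, h3, rfl⟩
    rw [Finset.sum_insert hk] at h3
    have hnn : 0 ≤ ∑ i ∈ S, |g i| := Finset.sum_nonneg (fun i _ => abs_nonneg _)
    have hb := h2 k (Finset.mem_insert_self k S)
    refine sInf_le_of_le ⟨g k, by linarith, hb.1, hb.2, rfl⟩ ?_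
    rw [Finset.sum_insert hk, EReal.coe_add]
    gcongr
    apply sInf_le
    refine ⟨g, ?_, fun i hi => h2 i (Finset.mem_insert_of_mem hi), ?_, rfl⟩
    · intro i
      have := h1 i
      rw [Finset.sum_insert hk] at this
      linarith
    · have := Int.natCast_natAbs (g k)
      omega

/-- For `1 ≤ j ≤ n`, every `s ∈ ℤ^m` and `η ∈ ℕ`, the partial
optimum over the first `j` columns obeys the dynamic-programming recurrence
`V_{{1,…,j}}(s, η) = min { f_j(c) + V_{{1,…,j−1}}(s − c·A_{•,j}, η − |c|) :
c ∈ ℤ, |c| ≤ η, l_j ≤ c ≤ u_j }`, with the minimum over the empty set being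
`+∞` and `+∞` absorbing for addition. -/
theorem partialOpt_dp_recurrence {m n : ℕ}
    (A : Matrix (Fin m) (Fin n) ℤ) (f : Fin n → ℤ → ℝ) (l u : Fin n → ℤ)
    (j : ℕ) (hj1 : 1 ≤ j) (hjn : j ≤ n) (s : Fin m → ℤ) (η : ℕ) :
    partialOpt A f l u (firstCols n j) s η =
      sInf { z : EReal | ∃ c : ℤ, |c| ≤ (η : ℤ) ∧
        l ⟨j - 1, by omega⟩ ≤ c ∧ c ≤ u ⟨j - 1, by omega⟩ ∧
        z = ((f ⟨j - 1, by omega⟩ c : ℝ) : EReal) +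
          partialOpt A f l u (firstCols n (j - 1))
            (fun i => s i - c * A i ⟨j - 1, by omega⟩) (η - c.natAbs) } := by
  rw [firstCols_pred_insert hj1 (by omega)]
  exact partialOpt_insert A f l u _ _ (notMem_firstCols_pred _) s η
end
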